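/- There is an absolute constant C > 0 with the following property. Let f : (0, π) → ℝ be twice weakly differentiable, i.e. f is C¹ and f′ is locally absolutely continuous with a.e. derivative f″. Then ∫_0^π ( |f″(θ)|² sin θ + |f′(θ)|² (sin θ)⁻¹ + |f(θ)|² (sin θ)⁻³ ) dθ ≤ C ( ∫_0^π |f″(θ) + (cos θ / sin θ) f′(θ) − (4 (cos θ)² / (sin θ)²) f(θ)|² sin θ dθ + ∫_0^π ( |f′(θ)|² sin θ + |f(θ)|² (sin θ)⁻¹ ) dθ ), where all integrals are allowed to be +∞. -/

import Mathlib

open MeasureTheory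

/-- `f` is locally absolutely continuous on the set `s` with a.e. derivative `f'`:
`f'` is integrable on compact subintervals of `s` and the fundamental theorem of
calculus representation holds between any two points of `s`. -/
def LocAC (s : Set ℝ) (f f' : ℝ → ℝ) : Prop :=
  (∀ a ∈ s, ∀ b ∈ s, IntervalIntegrable f' volume a b) ∧
  (∀ a ∈ s, ∀ b ∈ s, f b - f a = ∫ t in a..b, f' t)

open Real Set

/-!
Since `sin θ (f″ + cot θ f′) = (sin θ f′)′`, multiplying the operator by `f w` and integrating by
parts produces `∫ w ((f′)² sin θ + κ f² / sin θ) + ∫ sin θ w′ f f′` up to lower-order terms. For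
`w ≈ 1 / sin² θ` one has `|sin θ w′| ≲ 2 w`, so this is the quadratic form `x² - 2xy + κy²` in
`x = f′`, `y = f / sin θ`, which is elliptic exactly when `κ > 1`. This controls `f′` and `f`, and
then the operator itself controls `f″`. To avoid boundary terms, `w` is replaced by a cutoff that
vanishes where `sin θ = ε` and is comparable with `1 / sin² θ` where `sin² θ ≥ ε`; finally `ε → 0`.
-/

namespace LocAC

variable {s t : Set ℝ} {f f' g g' : ℝ → ℝ} {a b : ℝ}

lemma mono (h : LocAC t f f') (hst : s ⊆ t) : LocAC s f f' :=
  ⟨fun a ha b hb => h.1 a (hst ha) b (hst hb), fun a ha b hb => h.2 a (hst ha) b (hst hb)⟩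

lemma of_hasDerivAt (hs : s.OrdConnected) (hf : ∀ x ∈ s, HasDerivAt f (f' x) x)
    (hf' : ContinuousOn f' s) : LocAC s f f' := by
  have integrable (a) (ha : a ∈ s) (b) (hb : b ∈ s) : IntervalIntegrable f' volume a b :=
    (hf'.mono (hs.uIcc_subset ha hb)).intervalIntegrable
  refine ⟨integrable, fun a ha b hb => ?_⟩
  exact (intervalIntegral.integral_eq_sub_of_hasDerivAt
    (fun x hx => hf x (hs.uIcc_subset ha hb hx)) (integrable a ha b hb)).symm

lemma eqOn_add_integral (h : LocAC s f f') (ha : a ∈ s) :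
    EqOn f (fun x => f a + ∫ t in a..x, f' t) s :=
  fun x hx => by simp only [← h.2 a ha x hx, add_sub_cancel]

lemma absolutelyContinuousOnInterval (h : LocAC s f f') (hs : s.OrdConnected) (ha : a ∈ s)
    (hb : b ∈ s) : AbsolutelyContinuousOnInterval f a b := by
  have primitive_ac := (h.1 a ha b hb).absolutelyContinuousOnInterval_intervalIntegral
    (c := a) left_mem_uIcc
  rw [absolutelyContinuousOnInterval_iff] at primitive_ac ⊢
  refine fun ε hε => (primitive_ac ε hε).imp fun δ hδ => ⟨hδ.1, fun E hE hlen => ?_⟩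
  convert hδ.2 E hE hlen using 2 with i hi
  have mem := hE.1 i hi
  rw [h.eqOn_add_integral ha (hs.uIcc_subset ha hb mem.1),
    h.eqOn_add_integral ha (hs.uIcc_subset ha hb mem.2), dist_add_left]

lemma continuousOn_uIcc (h : LocAC s f f') (hs : s.OrdConnected) (ha : a ∈ s) (hb : b ∈ s) :
    ContinuousOn f (uIcc a b) :=
  (h.absolutelyContinuousOnInterval hs ha hb).continuousOn

lemma ae_hasDerivAt (h : LocAC s f f') (hs : s.OrdConnected) (ha : a ∈ s) (hb : b ∈ s) :
    ∀ᵐ x, x ∈ uIoc a b → HasDerivAt f (f' x) x := by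
  filter_upwards [(h.1 a ha b hb).ae_hasDerivAt_integral, Measure.ae_ne volume (max a b)]
    with x hderiv hne hx
  have hxIoo : x ∈ Ioo (min a b) (max a b) := ⟨hx.1, hx.2.lt_of_ne hne⟩
  refine ((hderiv (uIoc_subset_uIcc hx) a left_mem_uIcc).const_add (f a)).congr_of_eventuallyEq ?_
  filter_upwards [Ioo_mem_nhds hxIoo.1 hxIoo.2] with y hy
  exact h.eqOn_add_integral ha (hs.uIcc_subset ha hb (Ioo_subset_Icc_self hy))

lemma mul (hf : LocAC s f f') (hg : LocAC s g g') (hs : s.OrdConnected) :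
    LocAC s (fun x => f x * g x) (fun x => f' x * g x + f x * g' x) := by
  refine ⟨fun a ha b hb => ?_, fun a ha b hb => ?_⟩
  · exact ((hf.1 a ha b hb).mul_continuousOn (hg.continuousOn_uIcc hs ha hb)).add
      ((hg.1 a ha b hb).continuousOn_mul (hf.continuousOn_uIcc hs ha hb))
  · rw [← (hf.absolutelyContinuousOnInterval hs ha hb).integral_deriv_mul_eq_sub
      (hg.absolutelyContinuousOnInterval hs ha hb)]
    refine intervalIntegral.integral_congr_ae ?_
    filter_upwards [hf.ae_hasDerivAt hs ha hb, hg.ae_hasDerivAt hs ha hb] with x hfx hgx hx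
    rw [(hfx hx).deriv, (hgx hx).deriv]

lemma integrableOn_Icc (h : LocAC s f f') (ha : a ∈ s) (hb : b ∈ s) (hab : a ≤ b) :
    IntegrableOn f' (Icc a b) :=
  (intervalIntegrable_iff_integrableOn_Icc_of_le hab).1 (h.1 a ha b hb)

lemma integral_Icc (h : LocAC s f f') (ha : a ∈ s) (hb : b ∈ s) (hab : a ≤ b) :
    ∫ x in Icc a b, f' x = f b - f a := by
  rw [integral_Icc_eq_integral_Ioc, ← intervalIntegral.integral_of_le hab, h.2 a ha b hb]

end LocAC

section Integration

variable {α : Type*} [MeasurableSpace α] {μ : Measure α}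

lemma lintegral_ofReal_add_le_of_integral_nonpos {p N : α → ℝ} (hp : Integrable p μ)
    (hp_nonpos : ∫ x, p x ∂μ ≤ 0) (hpN : ∀ᵐ x ∂μ, 0 ≤ p x + N x) :
    ∫⁻ x, ENNReal.ofReal (p x + N x) ∂μ ≤ ∫⁻ x, ENNReal.ofReal (N x) ∂μ := by
  have neg_finite : ∫⁻ x, ENNReal.ofReal (-p x) ∂μ ≠ ⊤ := hp.neg.lintegral_lt_top.ne
  have pos_le_neg : ∫⁻ x, ENNReal.ofReal (p x) ∂μ ≤ ∫⁻ x, ENNReal.ofReal (-p x) ∂μ := by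
    rw [integral_eq_lintegral_pos_part_sub_lintegral_neg_part hp, sub_nonpos] at hp_nonpos
    exact (ENNReal.toReal_le_toReal hp.lintegral_lt_top.ne neg_finite).1 hp_nonpos
  have pointwise : ∀ᵐ x ∂μ, ENNReal.ofReal (p x + N x) + ENNReal.ofReal (-p x) ≤
      ENNReal.ofReal (N x) + ENNReal.ofReal (p x) := by
    filter_upwards [hpN] with x hx
    rcases le_total 0 (p x) with h | h
    · rw [ENNReal.ofReal_of_nonpos (neg_nonpos.2 h), add_zero, add_comm (p x)]
      exact ENNReal.ofReal_add_le
    · rw [← ENNReal.ofReal_add hx (neg_nonneg.2 h), ENNReal.ofReal_of_nonpos h, add_zero,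
        add_neg_cancel_comm]
  refine (ENNReal.add_le_add_iff_right neg_finite).1 ?_
  calc ∫⁻ x, ENNReal.ofReal (p x + N x) ∂μ + ∫⁻ x, ENNReal.ofReal (-p x) ∂μ
      = ∫⁻ x, ENNReal.ofReal (p x + N x) + ENNReal.ofReal (-p x) ∂μ :=
        (lintegral_add_right' _ hp.neg.aemeasurable.ennreal_ofReal).symm
    _ ≤ ∫⁻ x, ENNReal.ofReal (N x) + ENNReal.ofReal (p x) ∂μ := lintegral_mono_ae pointwise
    _ = ∫⁻ x, ENNReal.ofReal (N x) ∂μ + ∫⁻ x, ENNReal.ofReal (p x) ∂μ :=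
        lintegral_add_right' _ hp.aemeasurable.ennreal_ofReal
    _ ≤ ∫⁻ x, ENNReal.ofReal (N x) ∂μ + ∫⁻ x, ENNReal.ofReal (-p x) ∂μ := by gcongr

lemma setLIntegral_le_of_forall_superlevel {s : Set α} {g : α → ℝ} {φ : α → ENNReal}
    {M : ENNReal} (hg : ∀ x ∈ s, 0 < g x)
    (hM : ∀ ε : ℝ, 0 < ε → ε ≤ 1 → ∫⁻ x in s ∩ {x | ε ≤ g x}, φ x ∂μ ≤ M) :
    ∫⁻ x in s, φ x ∂μ ≤ M := by
  let S (n : ℕ) : Set α := s ∩ {x | 1 / ((n : ℝ) + 1) ≤ g x}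
  have S_mono : Monotone S := fun m n hmn =>
    inter_subset_inter_right s fun x (hx : _ ≤ g x) =>
      show _ ≤ g x from (Nat.one_div_le_one_div hmn).trans hx
  have iUnion_S : ⋃ n, S n = s := by
    refine (iUnion_subset fun n => inter_subset_left).antisymm fun x hx => mem_iUnion.2 ?_
    exact (exists_nat_one_div_lt (hg x hx)).imp fun n hn => ⟨hx, hn.le⟩
  rw [← iUnion_S, setLIntegral_iUnion_of_directed _ S_mono.directed_le]
  refine iSup_le fun n => hM _ Nat.one_div_pos_of_nat ?_
  simpa using Nat.one_div_le_one_div (α := ℝ) n.zero_le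

end Integration

/-- The density `|f″ + cot θ f′ − κ cot² θ f|² sin θ` of the residual of the second-order operator
in the Hardy inequality; `f'` and `f''` are passed separately because they are weak derivatives. -/
noncomputable def residualEnergy (κ : ℝ) (f f' f'' : ℝ → ℝ) (θ : ℝ) : ℝ :=
  (f'' θ + cos θ / sin θ * f' θ - κ * cos θ ^ 2 / sin θ ^ 2 * f θ) ^ 2 * sin θ

/-- The density of the lower-order terms on the right of the Hardy inequality. -/
noncomputable def firstOrderEnergy (f f' : ℝ → ℝ) (θ : ℝ) : ℝ :=
  f' θ ^ 2 * sin θ + f θ ^ 2 * (sin θ)⁻¹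

/-- The density of the left-hand side of the Hardy inequality. -/
noncomputable def secondOrderEnergy (f f' f'' : ℝ → ℝ) (θ : ℝ) : ℝ :=
  f'' θ ^ 2 * sin θ + f' θ ^ 2 * (sin θ)⁻¹ + f θ ^ 2 * (sin θ ^ 3)⁻¹

/-- The derivative of the flux `sin θ f′ f w`, as given by the product rule. -/
noncomputable def fluxDeriv (f f' f'' w w' : ℝ → ℝ) (θ : ℝ) : ℝ :=
  (cos θ * f' θ + sin θ * f'' θ) * (f θ * w θ) + sin θ * f' θ * (f' θ * w θ + f θ * w' θ)

lemma residualEnergy_nonneg {κ θ : ℝ} {f f' f'' : ℝ → ℝ} (hs : 0 ≤ sin θ) :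
    0 ≤ residualEnergy κ f f' f'' θ :=
  mul_nonneg (sq_nonneg _) hs

lemma firstOrderEnergy_nonneg {θ : ℝ} {f f' : ℝ → ℝ} (hs : 0 ≤ sin θ) :
    0 ≤ firstOrderEnergy f f' θ := by
  rw [firstOrderEnergy]
  positivity

/-- An admissible multiplier on `[a, b]`: it vanishes at the endpoints, so that the flux has zero
boundary values, and it satisfies the bounds of `1 / sin² θ - 1` up to lower-order terms. -/
structure IsHardyWeight (a b : ℝ) (w w' : ℝ → ℝ) : Prop where
  locAC : LocAC (Icc a b) w w'
  left_eq_zero : w a = 0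
  right_eq_zero : w b = 0
  nonneg : ∀ θ ∈ Icc a b, 0 ≤ w θ
  sin_sq_mul_le_one : ∀ θ ∈ Icc a b, sin θ ^ 2 * w θ ≤ 1
  abs_sin_mul_deriv_le : ∀ θ ∈ Icc a b, |sin θ * w' θ| ≤ 2 * (w θ + 1)

/-- `δ` is an ellipticity constant of the quadratic form `x² - 2xy + κy²`, which arises from the
flux identity with `x = f′` and `y = f / sin θ`. -/
structure IsEllipticityConst (κ δ : ℝ) : Prop where
  pos : 0 < δ
  mul_le : ∀ x y : ℝ, δ * (x ^ 2 + y ^ 2) ≤ x ^ 2 - 2 * x * y + κ * y ^ 2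

namespace IsEllipticityConst

variable {κ δ : ℝ}

lemma le_one (h : IsEllipticityConst κ δ) : δ ≤ 1 := by
  simpa using h.mul_le 1 0

lemma nonneg_left (h : IsEllipticityConst κ δ) : 0 ≤ κ :=
  h.pos.le.trans (by simpa using h.mul_le 0 1)

end IsEllipticityConst

lemma isEllipticityConst_of_one_lt {κ : ℝ} (hκ : 1 < κ) :
    IsEllipticityConst κ ((κ - 1) / (κ + 1)) where
  pos := div_pos (by linarith) (by linarith)
  mul_le x y := by
    rw [div_mul_eq_mul_div, div_le_iff₀ (by linarith)]
    linarith [sq_nonneg (2 * x - (κ + 1) * y), sq_nonneg ((κ - 1) * y)]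

section Coercivity

variable {κ δ θ : ℝ} {f f' f'' w w' : ℝ → ℝ}

/-- The flux identity divided by `sin θ`: here `x = f′`, `y = f / sin θ`, `g` is the residual,
`W = w`, and `m = sin θ w′`. -/
lemma normalized_flux_coercive {s x y g W m : ℝ} (hδ : IsEllipticityConst κ δ)
    (hW : 0 ≤ W) (hsW : s ^ 2 * W ≤ 1) (hm : |m| ≤ 2 * (W + 1)) :
    δ / 2 * (W + 1) * (x ^ 2 + y ^ 2) + g ^ 2 ≤
      x ^ 2 * W + κ * (1 - s ^ 2) * y ^ 2 * W + x * y * m + s * g * y * W +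
        (κ + 2 + 1 / δ) * (g ^ 2 + (x ^ 2 + y ^ 2)) := by
  have hδ_pos := hδ.pos
  have hκ := hδ.nonneg_left
  have form_bound : W * (δ * (x ^ 2 + y ^ 2)) ≤ W * (x ^ 2 - 2 * |x| * |y| + κ * y ^ 2) := by
    have := hδ.mul_le |x| |y|
    rw [sq_abs, sq_abs] at this
    exact mul_le_mul_of_nonneg_left this hW
  have cross_bound : -(2 * (W + 1) * (|x| * |y|)) ≤ x * y * m := by
    refine neg_le_of_abs_le ?_
    rw [abs_mul, abs_mul, mul_comm]
    gcongr
  have two_mul_abs_le : 2 * (|x| * |y|) ≤ x ^ 2 + y ^ 2 := by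
    rw [← sq_abs x, ← sq_abs y]
    linarith [two_mul_le_add_sq |x| |y|]
  have source_bound : -(δ / 2 * W * y ^ 2 + 1 / δ * g ^ 2 / 2) ≤ s * g * y * W := by
    have square : 0 ≤ W * (δ * y + s * g) ^ 2 / (2 * δ) := by positivity
    have expand : W * (δ * y + s * g) ^ 2 / (2 * δ) =
        δ / 2 * W * y ^ 2 + s * g * y * W + 1 / δ * (s ^ 2 * W * g ^ 2) / 2 := by
      field_simp
      ring
    have : 1 / δ * (s ^ 2 * W * g ^ 2) ≤ 1 / δ * g ^ 2 := by
      gcongr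
      exact mul_le_of_le_one_left (sq_nonneg g) hsW
    linarith
  have potential_loss : κ * (s ^ 2 * W) * y ^ 2 ≤ κ * y ^ 2 := by
    gcongr
    exact mul_le_of_le_one_right hκ hsW
  have lower_order : δ / 2 * (x ^ 2 + y ^ 2) ≤ x ^ 2 + y ^ 2 :=
    mul_le_of_le_one_left (by positivity) (by linarith [hδ.le_one])
  linarith [sq_nonneg g, show 0 ≤ 1 / δ * g ^ 2 by positivity,
    show 0 ≤ 1 / δ * (x ^ 2 + y ^ 2) by positivity, show 0 ≤ δ / 2 * W * x ^ 2 by positivity,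
    show 0 ≤ κ * g ^ 2 by positivity, show 0 ≤ κ * x ^ 2 by positivity]

lemma fluxDeriv_coercive (hδ : IsEllipticityConst κ δ) (hs : 0 < sin θ) (hw : 0 ≤ w θ)
    (hsw : sin θ ^ 2 * w θ ≤ 1) (hw' : |sin θ * w' θ| ≤ 2 * (w θ + 1)) :
    δ / 2 * (w θ + 1) * firstOrderEnergy f f' θ + residualEnergy κ f f' f'' θ ≤
      fluxDeriv f f' f'' w w' θ +
        (κ + 2 + 1 / δ) * (residualEnergy κ f f' f'' θ + firstOrderEnergy f f' θ) := by
  set g := f'' θ + cos θ / sin θ * f' θ - κ * cos θ ^ 2 / sin θ ^ 2 * f θ with hg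
  have normalized := mul_le_mul_of_nonneg_left (normalized_flux_coercive (x := f' θ)
    (y := f θ / sin θ) (g := g) hδ hw hsw hw') hs.le
  have first : firstOrderEnergy f f' θ = sin θ * (f' θ ^ 2 + (f θ / sin θ) ^ 2) := by
    rw [firstOrderEnergy]
    field_simp
  have residual : residualEnergy κ f f' f'' θ = sin θ * g ^ 2 := by
    rw [residualEnergy, mul_comm]
  have flux : fluxDeriv f f' f'' w w' θ = sin θ * (f' θ ^ 2 * w θ +
      κ * (1 - sin θ ^ 2) * (f θ / sin θ) ^ 2 * w θ + f' θ * (f θ / sin θ) * (sin θ * w' θ) +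
        sin θ * g * (f θ / sin θ) * w θ) := by
    rw [fluxDeriv, hg, ← cos_sq']
    field_simp
    ring
  rw [first, residual, flux]
  linarith

lemma secondOrderEnergy_le (hs : 0 < sin θ) :
    secondOrderEnergy f f' f'' θ ≤ 3 * residualEnergy κ f f' f'' θ +
      (4 + 3 * κ ^ 2) * (firstOrderEnergy f f' θ / sin θ ^ 2) := by
  set g := f'' θ + cos θ / sin θ * f' θ - κ * cos θ ^ 2 / sin θ ^ 2 * f θ with hg
  have first : firstOrderEnergy f f' θ / sin θ ^ 2 =
      sin θ * ((f' θ / sin θ) ^ 2 + (f θ / sin θ ^ 2) ^ 2) := by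
    rw [firstOrderEnergy]
    field_simp
  have second : secondOrderEnergy f f' f'' θ =
      sin θ * (f'' θ ^ 2 + (f' θ / sin θ) ^ 2 + (f θ / sin θ ^ 2) ^ 2) := by
    rw [secondOrderEnergy]
    field_simp
  have residual : residualEnergy κ f f' f'' θ = sin θ * g ^ 2 := by
    rw [residualEnergy, mul_comm]
  have f''_eq : f'' θ = g + -(cos θ * (f' θ / sin θ)) + κ * (cos θ ^ 2 * (f θ / sin θ ^ 2)) := by
    rw [hg]
    ring
  rw [first, second, residual]
  generalize f' θ / sin θ = x at *
  generalize f θ / sin θ ^ 2 = y at *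
  have three_squares (a b c : ℝ) : (a + b + c) ^ 2 ≤ 3 * (a ^ 2 + b ^ 2 + c ^ 2) := by
    linarith [sq_nonneg (a - b), sq_nonneg (b - c), sq_nonneg (a - c)]
  have f''_sq : f'' θ ^ 2 ≤ 3 * (g ^ 2 + x ^ 2 + κ ^ 2 * y ^ 2) := by
    rw [f''_eq]
    refine (three_squares _ _ _).trans ?_
    rw [neg_sq, mul_pow, mul_pow, mul_pow]
    have := cos_sq_le_one θ
    gcongr
    · exact mul_le_of_le_one_left (sq_nonneg x) this
    · exact mul_le_of_le_one_left (sq_nonneg y) (pow_le_one₀ (sq_nonneg _) this)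
  have : f'' θ ^ 2 + x ^ 2 + y ^ 2 ≤ 3 * g ^ 2 + (4 + 3 * κ ^ 2) * (x ^ 2 + y ^ 2) := by
    have : 0 ≤ κ ^ 2 * x ^ 2 := by positivity
    linarith [sq_nonneg y]
  linarith [mul_le_mul_of_nonneg_left this hs.le]

end Coercivity

section WeightedEstimate

variable {κ δ a b : ℝ} {f f' f'' w w' : ℝ → ℝ}

lemma locAC_flux {s : Set ℝ} (hs : s.OrdConnected) (hf : LocAC s f f') (hf' : LocAC s f' f'')
    (hw : LocAC s w w') :
    LocAC s (fun θ => sin θ * f' θ * (f θ * w θ)) (fluxDeriv f f' f'' w w') :=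
  have sin_locAC : LocAC s sin cos :=
    .of_hasDerivAt hs (fun θ _ => hasDerivAt_sin θ) continuous_cos.continuousOn
  (sin_locAC.mul hf' hs).mul (hf.mul hw hs) hs

lemma lintegral_residual_add_firstOrder_le (hab : a ≤ b) (hI : Icc a b ⊆ Ioo 0 π)
    (hf : LocAC (Icc a b) f f') (hf' : LocAC (Icc a b) f' f'') :
    ∫⁻ θ in Icc a b, ENNReal.ofReal (residualEnergy κ f f' f'' θ + firstOrderEnergy f f' θ) ≤
      (∫⁻ θ in Icc a b, ENNReal.ofReal (residualEnergy κ f f' f'' θ)) +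
        ∫⁻ θ in Icc a b, ENNReal.ofReal (firstOrderEnergy f f' θ) := by
  have ha : a ∈ Icc a b := left_mem_Icc.2 hab
  have hb : b ∈ Icc a b := right_mem_Icc.2 hab
  have f_cont := hf.continuousOn_uIcc ordConnected_Icc ha hb
  have f'_cont := hf'.continuousOn_uIcc ordConnected_Icc ha hb
  rw [uIcc_of_le hab] at f_cont f'_cont
  have first_cont : ContinuousOn (firstOrderEnergy f f') (Icc a b) :=
    ((f'_cont.pow 2).mul continuousOn_sin).add ((f_cont.pow 2).mul
      (continuousOn_sin.inv₀ fun θ hθ => (sin_pos_of_mem_Ioo (hI hθ)).ne'))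
  rw [← lintegral_add_right' _ (first_cont.aemeasurable measurableSet_Icc).ennreal_ofReal]
  exact lintegral_mono fun θ => ENNReal.ofReal_add_le

lemma IsHardyWeight.lintegral_le (hw : IsHardyWeight a b w w') (hab : a ≤ b)
    (hI : Icc a b ⊆ Ioo 0 π) (hf : LocAC (Icc a b) f f') (hf' : LocAC (Icc a b) f' f'')
    (hδ : IsEllipticityConst κ δ) :
    ∫⁻ θ in Icc a b, ENNReal.ofReal
        (δ / 2 * (w θ + 1) * firstOrderEnergy f f' θ + residualEnergy κ f f' f'' θ) ≤
      ENNReal.ofReal (κ + 2 + 1 / δ) *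
        ((∫⁻ θ in Icc a b, ENNReal.ofReal (residualEnergy κ f f' f'' θ)) +
          ∫⁻ θ in Icc a b, ENNReal.ofReal (firstOrderEnergy f f' θ)) := by
  have hδ_pos := hδ.pos
  have hκ := hδ.nonneg_left
  have ha : a ∈ Icc a b := left_mem_Icc.2 hab
  have hb : b ∈ Icc a b := right_mem_Icc.2 hab
  have sin_pos (θ) (hθ : θ ∈ Icc a b) : 0 < sin θ := sin_pos_of_mem_Ioo (hI hθ)
  have flux := locAC_flux ordConnected_Icc hf hf' hw.locAC
  have flux_integral : ∫ θ in Icc a b, fluxDeriv f f' f'' w w' θ ≤ 0 := by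
    rw [flux.integral_Icc ha hb hab, hw.left_eq_zero, hw.right_eq_zero]
    simp
  have coercive (θ) (hθ : θ ∈ Icc a b) := fluxDeriv_coercive (f := f) (f' := f') (f'' := f'')
    hδ (sin_pos θ hθ) (hw.nonneg θ hθ) (hw.sin_sq_mul_le_one θ hθ)
    (hw.abs_sin_mul_deriv_le θ hθ)
  have flux_add_nonneg (θ) (hθ : θ ∈ Icc a b) : 0 ≤ fluxDeriv f f' f'' w w' θ +
      (κ + 2 + 1 / δ) * (residualEnergy κ f f' f'' θ + firstOrderEnergy f f' θ) := by
    have := hw.nonneg θ hθ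
    have := residualEnergy_nonneg (κ := κ) (f := f) (f' := f') (f'' := f'') (sin_pos θ hθ).le
    have := firstOrderEnergy_nonneg (f := f) (f' := f') (sin_pos θ hθ).le
    exact le_trans (by positivity) (coercive θ hθ)
  grw [← lintegral_residual_add_firstOrder_le hab hI hf hf']
  rw [← lintegral_const_mul' _ _ ENNReal.ofReal_ne_top]
  simp_rw [← ENNReal.ofReal_mul (show 0 ≤ κ + 2 + 1 / δ by positivity)]
  refine (setLIntegral_mono' measurableSet_Icc fun θ hθ =>
    ENNReal.ofReal_le_ofReal (coercive θ hθ)).trans ?_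
  exact lintegral_ofReal_add_le_of_integral_nonpos (flux.integrableOn_Icc ha hb hab) flux_integral
    ((ae_restrict_iff' measurableSet_Icc).2 (.of_forall flux_add_nonneg))

end WeightedEstimate

/-- The cutoff `(s + ε / s)⁻² - (1 + ε)⁻²` of the multiplier `s⁻²`, as a function of `s = sin θ`.
The constant makes it vanish at `s = ε`, and `s²` only has to dominate `ε` for it to be
comparable with `s⁻²`. -/
noncomputable def cutoffWeight (ε s : ℝ) : ℝ :=
  s ^ 2 / (s ^ 2 + ε) ^ 2 - 1 / (1 + ε) ^ 2

/-- The derivative of `cutoffWeight ε`. -/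
noncomputable def cutoffWeightDeriv (ε s : ℝ) : ℝ :=
  2 * s * (ε - s ^ 2) / (s ^ 2 + ε) ^ 3

section CutoffWeight

variable {ε s : ℝ}

lemma hasDerivAt_cutoffWeight (hε : 0 < ε) (s : ℝ) :
    HasDerivAt (cutoffWeight ε) (cutoffWeightDeriv ε s) s := by
  have hden : s ^ 2 + ε ≠ 0 := by positivity
  have hsq : HasDerivAt (fun s : ℝ => s ^ 2) (2 * s) s := by simpa using hasDerivAt_pow 2 s
  have hdenom : HasDerivAt (fun s : ℝ => (s ^ 2 + ε) ^ 2) (2 * (s ^ 2 + ε) * (2 * s)) s := by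
    simpa using (hsq.add_const ε).fun_pow 2
  refine ((hsq.fun_div hdenom (pow_ne_zero 2 hden)).sub_const (1 / (1 + ε) ^ 2)).congr_deriv ?_
  rw [cutoffWeightDeriv]
  field_simp
  ring

lemma continuous_cutoffWeightDeriv (hε : 0 < ε) : Continuous (cutoffWeightDeriv ε) := by
  have hden (s : ℝ) : (s ^ 2 + ε) ^ 3 ≠ 0 := by positivity
  unfold cutoffWeightDeriv
  fun_prop (disch := exact hden _)

lemma cutoffWeight_self (hε : 0 < ε) : cutoffWeight ε ε = 0 := by
  rw [cutoffWeight]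
  field_simp
  ring

lemma cutoffWeight_nonneg (hε : 0 < ε) (hεs : ε ≤ s) (hs : s ≤ 1) : 0 ≤ cutoffWeight ε s := by
  have hs₀ : 0 < s := hε.trans_le hεs
  have : s ^ 2 + ε ≤ s * (1 + ε) := by
    linarith [mul_nonneg (sub_nonneg.2 hs) (sub_nonneg.2 hεs)]
  rw [cutoffWeight, sub_nonneg, div_le_div_iff₀ (by positivity) (by positivity), one_mul,
    ← mul_pow]
  gcongr

lemma sq_mul_cutoffWeight_le_one (hε : 0 < ε) (s : ℝ) : s ^ 2 * cutoffWeight ε s ≤ 1 := by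
  have main : s ^ 2 * (s ^ 2 / (s ^ 2 + ε) ^ 2) ≤ 1 := by
    rw [← mul_div_assoc, div_le_one (by positivity), ← sq]
    gcongr
    linarith
  have : 0 ≤ s ^ 2 * (1 / (1 + ε) ^ 2) := by positivity
  rw [cutoffWeight, mul_sub]
  linarith

lemma div_sq_le_cutoffWeight_add_one (hε : 0 < ε) (s : ℝ) :
    s ^ 2 / (s ^ 2 + ε) ^ 2 ≤ cutoffWeight ε s + 1 := by
  have : 1 / (1 + ε) ^ 2 ≤ 1 := div_le_self zero_le_one (one_le_pow₀ (by linarith))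
  rw [cutoffWeight]
  linarith

lemma abs_mul_cutoffWeightDeriv_le (hε : 0 < ε) (s : ℝ) :
    |s * cutoffWeightDeriv ε s| ≤ 2 * (cutoffWeight ε s + 1) := by
  have hden : 0 < s ^ 2 + ε := by positivity
  have ratio : |(ε - s ^ 2) / (s ^ 2 + ε)| ≤ 1 := by
    rw [abs_div, abs_of_pos hden, div_le_one hden, abs_le]
    constructor <;> linarith [sq_nonneg s]
  calc |s * cutoffWeightDeriv ε s|
      = |2 * (s ^ 2 / (s ^ 2 + ε) ^ 2) * ((ε - s ^ 2) / (s ^ 2 + ε))| := by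
        rw [cutoffWeightDeriv]
        congr 1
        field_simp
    _ = 2 * (s ^ 2 / (s ^ 2 + ε) ^ 2) * |(ε - s ^ 2) / (s ^ 2 + ε)| := by
        rw [abs_mul, abs_of_nonneg (by positivity)]
    _ ≤ 2 * (s ^ 2 / (s ^ 2 + ε) ^ 2) := mul_le_of_le_one_right (by positivity) ratio
    _ ≤ 2 * (cutoffWeight ε s + 1) := by
        gcongr
        exact div_sq_le_cutoffWeight_add_one hε s

lemma one_div_four_mul_sq_le_cutoffWeight_add_one (hε : 0 < ε) (hεs : ε ≤ s ^ 2) :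
    1 / (4 * s ^ 2) ≤ cutoffWeight ε s + 1 := by
  have hs : 0 < s ^ 2 := hε.trans_le hεs
  calc 1 / (4 * s ^ 2) = s ^ 2 / (s ^ 2 + s ^ 2) ^ 2 := by
        field_simp
        ring
    _ ≤ s ^ 2 / (s ^ 2 + ε) ^ 2 := by gcongr
    _ ≤ cutoffWeight ε s + 1 := div_sq_le_cutoffWeight_add_one hε s

lemma Icc_arcsin_pi_sub_arcsin (hε : 0 < ε) (hε_le : ε ≤ 1) :
    Icc (arcsin ε) (π - arcsin ε) = Ioo 0 π ∩ {θ | ε ≤ sin θ} := by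
  have key {θ : ℝ} (hθ : θ ∈ Icc (-(π / 2)) (π / 2)) : arcsin ε ≤ θ ↔ ε ≤ sin θ :=
    arcsin_le_iff_le_sin ⟨by linarith, hε_le⟩ hθ
  have arcsin_pos : 0 < arcsin ε := Real.arcsin_pos.2 hε
  have arcsin_le := arcsin_le_pi_div_two ε
  ext θ
  simp only [mem_inter_iff, mem_Icc, mem_Ioo, mem_ofPred_eq]
  rcases le_total θ (π / 2) with h | h
  · constructor
    · rintro ⟨h_arcsin, _⟩
      exact ⟨⟨by linarith, by linarith⟩, (key ⟨by linarith, h⟩).1 h_arcsin⟩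
    · rintro ⟨⟨_, _⟩, h_sin⟩
      exact ⟨(key ⟨by linarith, h⟩).2 h_sin, by linarith⟩
  · rw [← sin_pi_sub θ, le_sub_comm]
    constructor
    · rintro ⟨_, h_arcsin⟩
      exact ⟨⟨by linarith, by linarith⟩, (key ⟨by linarith, by linarith⟩).1 h_arcsin⟩
    · rintro ⟨⟨_, _⟩, h_sin⟩
      exact ⟨by linarith, (key ⟨by linarith, by linarith⟩).2 h_sin⟩

lemma Ioo_inter_le_sin_sq_subset_Icc_arcsin (hε : 0 < ε) (hε_le : ε ≤ 1) :
    Ioo 0 π ∩ {θ | ε ≤ sin θ ^ 2} ⊆ Icc (arcsin ε) (π - arcsin ε) := by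
  rw [Icc_arcsin_pi_sub_arcsin hε hε_le]
  rintro θ ⟨hθ, hεθ⟩
  exact ⟨hθ, hεθ.trans (pow_le_of_le_one (sin_pos_of_mem_Ioo hθ).le (sin_le_one θ) two_ne_zero)⟩

lemma isHardyWeight_cutoffWeight (hε : 0 < ε) (hε_le : ε ≤ 1) :
    IsHardyWeight (arcsin ε) (π - arcsin ε) (fun θ => cutoffWeight ε (sin θ))
      (fun θ => cutoffWeightDeriv ε (sin θ) * cos θ) where
  locAC := .of_hasDerivAt ordConnected_Icc
    (fun θ _ => (hasDerivAt_cutoffWeight hε (sin θ)).comp θ (hasDerivAt_sin θ))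
    (((continuous_cutoffWeightDeriv hε).comp continuous_sin).mul continuous_cos).continuousOn
  left_eq_zero := by rw [sin_arcsin (by linarith) hε_le, cutoffWeight_self hε]
  right_eq_zero := by rw [sin_pi_sub, sin_arcsin (by linarith) hε_le, cutoffWeight_self hε]
  nonneg θ hθ := by
    rw [Icc_arcsin_pi_sub_arcsin hε hε_le] at hθ
    exact cutoffWeight_nonneg hε hθ.2 (sin_le_one θ)
  sin_sq_mul_le_one θ _ := sq_mul_cutoffWeight_le_one hε (sin θ)
  abs_sin_mul_deriv_le θ _ := by
    rw [← mul_assoc, abs_mul]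
    exact (mul_le_of_le_one_right (abs_nonneg _) (abs_cos_le_one θ)).trans
      (abs_mul_cutoffWeightDeriv_le hε (sin θ))

end CutoffWeight

section HardyInequality

variable {κ δ ε θ : ℝ} {f f' f'' : ℝ → ℝ}

lemma secondOrderEnergy_le_weighted (hδ : 0 < δ) (hδ_le : δ ≤ 1) (hε : 0 < ε)
    (hs : 0 < sin θ) (hεs : ε ≤ sin θ ^ 2) :
    secondOrderEnergy f f' f'' θ ≤ 8 * (4 + 3 * κ ^ 2) / δ *
      (δ / 2 * (cutoffWeight ε (sin θ) + 1) * firstOrderEnergy f f' θ +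
        residualEnergy κ f f' f'' θ) := by
  have first_nonneg := firstOrderEnergy_nonneg (f := f) (f' := f') hs.le
  have residual_nonneg :=
    residualEnergy_nonneg (κ := κ) (f := f) (f' := f') (f'' := f'') hs.le
  have first_le : firstOrderEnergy f f' θ / sin θ ^ 2 ≤
      4 * ((cutoffWeight ε (sin θ) + 1) * firstOrderEnergy f f' θ) := by
    have := mul_le_mul_of_nonneg_right (one_div_four_mul_sq_le_cutoffWeight_add_one hε hεs)
      first_nonneg
    calc firstOrderEnergy f f' θ / sin θ ^ 2
        = 4 * (1 / (4 * sin θ ^ 2) * firstOrderEnergy f f' θ) := by field_simp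
      _ ≤ _ := by gcongr
  have three_le : 3 ≤ 8 * (4 + 3 * κ ^ 2) / δ := by
    rw [le_div_iff₀ hδ]
    linarith [sq_nonneg κ]
  calc secondOrderEnergy f f' f'' θ
      ≤ 3 * residualEnergy κ f f' f'' θ +
          (4 + 3 * κ ^ 2) * (firstOrderEnergy f f' θ / sin θ ^ 2) := secondOrderEnergy_le hs
    _ ≤ 8 * (4 + 3 * κ ^ 2) / δ * residualEnergy κ f f' f'' θ + (4 + 3 * κ ^ 2) *
          (4 * ((cutoffWeight ε (sin θ) + 1) * firstOrderEnergy f f' θ)) := by gcongr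
    _ = _ := by
        field_simp
        ring

lemma setLIntegral_secondOrderEnergy_le (hδ : IsEllipticityConst κ δ)
    (hf : LocAC (Ioo 0 π) f f') (hf' : LocAC (Ioo 0 π) f' f'') (hε : 0 < ε) (hε_le : ε ≤ 1) :
    ∫⁻ θ in Ioo 0 π ∩ {θ | ε ≤ sin θ ^ 2}, ENNReal.ofReal (secondOrderEnergy f f' f'' θ) ≤
      ENNReal.ofReal (8 * (4 + 3 * κ ^ 2) / δ * (κ + 2 + 1 / δ)) *
        ((∫⁻ θ in Ioo 0 π, ENNReal.ofReal (residualEnergy κ f f' f'' θ)) +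
          ∫⁻ θ in Ioo 0 π, ENNReal.ofReal (firstOrderEnergy f f' θ)) := by
  set C := 8 * (4 + 3 * κ ^ 2) / δ
  set I := Icc (arcsin ε) (π - arcsin ε)
  have C_nonneg : 0 ≤ C := div_nonneg (by positivity) hδ.pos.le
  have I_subset : I ⊆ Ioo 0 π :=
    (Icc_arcsin_pi_sub_arcsin hε hε_le).subset.trans inter_subset_left
  have superlevel_meas : MeasurableSet (Ioo 0 π ∩ {θ | ε ≤ sin θ ^ 2}) :=
    measurableSet_Ioo.inter (measurableSet_le measurable_const (measurable_sin.pow_const 2))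
  have endpoints_le : arcsin ε ≤ π - arcsin ε := by linarith [arcsin_le_pi_div_two ε]
  let weighted (θ : ℝ) : ℝ := δ / 2 * (cutoffWeight ε (sin θ) + 1) * firstOrderEnergy f f' θ +
    residualEnergy κ f f' f'' θ
  calc ∫⁻ θ in Ioo 0 π ∩ {θ | ε ≤ sin θ ^ 2}, ENNReal.ofReal (secondOrderEnergy f f' f'' θ)
      ≤ ∫⁻ θ in Ioo 0 π ∩ {θ | ε ≤ sin θ ^ 2}, ENNReal.ofReal (C * weighted θ) :=
        setLIntegral_mono' superlevel_meas fun θ hθ => ENNReal.ofReal_le_ofReal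
          (secondOrderEnergy_le_weighted hδ.pos hδ.le_one hε (sin_pos_of_mem_Ioo hθ.1) hθ.2)
    _ ≤ ∫⁻ θ in I, ENNReal.ofReal (C * weighted θ) :=
        lintegral_mono_set (Ioo_inter_le_sin_sq_subset_Icc_arcsin hε hε_le)
    _ = ENNReal.ofReal C * ∫⁻ θ in I, ENNReal.ofReal (weighted θ) := by
        simp_rw [ENNReal.ofReal_mul C_nonneg]
        exact lintegral_const_mul' _ _ ENNReal.ofReal_ne_top
    _ ≤ ENNReal.ofReal C * (ENNReal.ofReal (κ + 2 + 1 / δ) *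
          ((∫⁻ θ in I, ENNReal.ofReal (residualEnergy κ f f' f'' θ)) +
            ∫⁻ θ in I, ENNReal.ofReal (firstOrderEnergy f f' θ))) := by
        gcongr
        exact (isHardyWeight_cutoffWeight hε hε_le).lintegral_le endpoints_le I_subset
          (hf.mono I_subset) (hf'.mono I_subset) hδ
    _ ≤ _ := by
        rw [← mul_assoc, ← ENNReal.ofReal_mul C_nonneg]
        gcongr

theorem hardy_second_order_general {κ : ℝ} (hκ : 1 < κ) :
    ∃ C : ℝ, 0 < C ∧ ∀ f f' f'' : ℝ → ℝ, LocAC (Ioo 0 π) f f' → LocAC (Ioo 0 π) f' f'' →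
      ∫⁻ θ in Ioo 0 π, ENNReal.ofReal (secondOrderEnergy f f' f'' θ) ≤
        ENNReal.ofReal C *
          ((∫⁻ θ in Ioo 0 π, ENNReal.ofReal (residualEnergy κ f f' f'' θ)) +
            ∫⁻ θ in Ioo 0 π, ENNReal.ofReal (firstOrderEnergy f f' θ)) := by
  have hδ := isEllipticityConst_of_one_lt hκ
  set δ := (κ - 1) / (κ + 1)
  have : 0 < δ := hδ.pos
  refine ⟨8 * (4 + 3 * κ ^ 2) / δ * (κ + 2 + 1 / δ), by positivity, fun f f' f'' hf hf' => ?_⟩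
  exact setLIntegral_le_of_forall_superlevel (g := fun θ => sin θ ^ 2)
    (fun θ hθ => pow_pos (sin_pos_of_mem_Ioo hθ) 2)
    fun ε hε hε_le => setLIntegral_secondOrderEnergy_le hδ hf hf' hε hε_le

end HardyInequality

/-- Second-order Hardy-type inequality of Lemma A.2 (v): if `f` is `C¹` on `(0,π)` with
derivative `f'` and `f'` is locally absolutely continuous with a.e. derivative `f''`, then
`∫ ( (f'')² sin θ + (f')² (sin θ)⁻¹ + f² (sin θ)⁻³ )
  ≤ C ( ∫ (f'' + (cos θ/sin θ) f' − (4 cos²θ/sin²θ) f)² sin θ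
        + ∫ ( (f')² sin θ + f² (sin θ)⁻¹ ) )`. -/
theorem hardy_second_order :
    ∃ C : ℝ, 0 < C ∧
      ∀ f f' f'' : ℝ → ℝ,
        (∀ x ∈ Set.Ioo 0 Real.pi, HasDerivAt f (f' x) x) →
        ContinuousOn f' (Set.Ioo 0 Real.pi) →
        LocAC (Set.Ioo 0 Real.pi) f' f'' →
        (∫⁻ θ in Set.Ioo 0 Real.pi,
            ENNReal.ofReal ((f'' θ) ^ 2 * Real.sin θ + (f' θ) ^ 2 * (Real.sin θ)⁻¹ +
              (f θ) ^ 2 * ((Real.sin θ) ^ 3)⁻¹)) ≤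
          ENNReal.ofReal C *
            ((∫⁻ θ in Set.Ioo 0 Real.pi,
                ENNReal.ofReal
                  ((f'' θ + Real.cos θ / Real.sin θ * f' θ -
                      4 * (Real.cos θ) ^ 2 / (Real.sin θ) ^ 2 * f θ) ^ 2 * Real.sin θ)) +
             (∫⁻ θ in Set.Ioo 0 Real.pi,
                ENNReal.ofReal
                  ((f' θ) ^ 2 * Real.sin θ + (f θ) ^ 2 * (Real.sin θ)⁻¹))) := by
  obtain ⟨C, hC, hardy⟩ := hardy_second_order_general (κ := 4) (by norm_num)
  exact ⟨C, hC, fun f f' f'' hf hf' hf'' =>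
    hardy f f' f'' (.of_hasDerivAt Set.ordConnected_Ioo hf hf') hf''⟩
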